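/- The spin Hamiltonian H_1 is obtained from the operator \bar H_1 = −4 T_1^* − 2(2b+1) Σ_i ∂_{z_i} + 4ω Σ_i z_i ∂_{z_i} + Nω(4a+2b+1) by the change of variables z_i = x_i² and conjugation with the gauge factor μ(x) = e^{−ω r²/2} Π_{i=1}^N |x_i² − x_{i+1}²|^a x_i^b, where T_1^* = Σ_i z_i ∂_{z_i}² + 2a Σ_i (z_i − z_{i+1})^{-1}(z_i ∂_{z_i} − z_{i+1} ∂_{z_{i+1}}) − a Σ_i (z_i + z_{i+1})(z_i − z_{i+1})^{-2}(1 − S_{i,i+1}). Precisely: let ζ : C_1 → Z_1, ζ(x) = (x_1²,…,x_N²), where Z_1 = {z ∈ ℝ^N : 0 < z_1 < ⋯ < z_N}; then for every smooth Σ-valued function F on Z_1 and every x ∈ C_1, H_1(μ · (F∘ζ))(x) = μ(x) · ((\bar H_1 F)(ζ(x))). -/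

import Mathlib

noncomputable section

/-- The spin space `Σ`: complex functions on `Fin N → Fin d`. -/
abbrev Spin (N d : ℕ) : Type := (Fin N → Fin d) → ℂ

/-- Partial derivative `∂_i F` of a function of `N` real variables. -/
noncomputable def pd {N : ℕ} {E : Type} [NormedAddCommGroup E] [NormedSpace ℝ E]
    (i : Fin N) (F : (Fin N → ℝ) → E) : (Fin N → ℝ) → E :=
  fun x => fderiv ℝ F x (Pi.single i 1)

/-- The spin exchange operator `S_{ij}`, transposing the `i`-th and `j`-th spin slots. -/
def Sop {N d : ℕ} (i j : Fin N) (v : Spin N d) : Spin N d :=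
  fun c => v (c ∘ Equiv.swap i j)

/-- The configuration space `C_1 = {x : 0 < x_1 < ⋯ < x_N}` (also the domain
`Z_1 = {z : 0 < z_1 < ⋯ < z_N}`). -/
def C1 (N : ℕ) [NeZero N] : Set (Fin N → ℝ) := {x | StrictMono x ∧ 0 < x 0}

/-- The change of variables `ζ(x) = (x_1², …, x_N²)`. -/
def zeta {N : ℕ} (x : Fin N → ℝ) : Fin N → ℝ := fun i => (x i) ^ 2

/-- The Hamiltonian `H_1 = -∑ i ∂_i² + V_1` with
`V_1 = ω² r² + ∑ i b(b-1)/x_i² + ∑ i 8a² x_i²/((x_i² - x_{i-1}²)(x_i² - x_{i+1}²))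
  + 4a ∑ i (x_i² + x_{i+1}²)(x_i² - x_{i+1}²)⁻² (a - S_{i,i+1})` (indices cyclic). -/
noncomputable def H1 {N d : ℕ} [NeZero N] (a b ω : ℝ)
    (Ψ : (Fin N → ℝ) → Spin N d) : (Fin N → ℝ) → Spin N d :=
  fun x =>
    -(∑ i : Fin N, pd i (pd i Ψ) x)
    + (ω ^ 2 * (∑ i : Fin N, (x i) ^ 2)
        + (∑ i : Fin N, b * (b - 1) / (x i) ^ 2)
        + ∑ i : Fin N, 8 * a ^ 2 * (x i) ^ 2 /
            (((x i) ^ 2 - (x (i - 1)) ^ 2) * ((x i) ^ 2 - (x (i + 1)) ^ 2))) • Ψ x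
    + (4 * a) • ∑ i : Fin N,
        (((x i) ^ 2 + (x (i + 1)) ^ 2) / ((x i) ^ 2 - (x (i + 1)) ^ 2) ^ 2) •
          (a • Ψ x - Sop i (i + 1) (Ψ x))

/-- The gauge factor `μ(x) = exp(-ω r²/2) ∏ i |x_i² - x_{i+1}²|^a x_i^b`. -/
noncomputable def mu1 {N : ℕ} [NeZero N] (a b ω : ℝ) (x : Fin N → ℝ) : ℝ :=
  Real.exp (-(ω / 2) * ∑ i : Fin N, (x i) ^ 2) *
    ∏ i : Fin N, (|(x i) ^ 2 - (x (i + 1)) ^ 2| ^ a * (x i) ^ b)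

/-- The operator `T_1^* = ∑ i z_i ∂_i² + 2a ∑ i (z_i - z_{i+1})⁻¹ (z_i ∂_i - z_{i+1} ∂_{i+1})
  - a ∑ i (z_i + z_{i+1})(z_i - z_{i+1})⁻² (1 - S_{i,i+1})`. -/
noncomputable def T1star {N d : ℕ} [NeZero N] (a : ℝ)
    (F : (Fin N → ℝ) → Spin N d) : (Fin N → ℝ) → Spin N d :=
  fun z =>
    (∑ i : Fin N, z i • pd i (pd i F) z)
    + (2 * a) • ∑ i : Fin N, (z i - z (i + 1))⁻¹ •
        (z i • pd i F z - z (i + 1) • pd (i + 1) F z)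
    - a • ∑ i : Fin N, ((z i + z (i + 1)) / (z i - z (i + 1)) ^ 2) •
        (F z - Sop i (i + 1) (F z))

/-- The gauge Hamiltonian `H̄_1 = -4 T_1^* - 2(2b+1) ∑ i ∂_i + 4ω ∑ i z_i ∂_i
  + Nω(4a+2b+1)`. -/
noncomputable def Hbar1 {N d : ℕ} [NeZero N] (a b ω : ℝ)
    (F : (Fin N → ℝ) → Spin N d) : (Fin N → ℝ) → Spin N d :=
  fun z =>
    (-4 : ℝ) • T1star a F z - (2 * (2 * b + 1)) • ∑ i : Fin N, pd i F z
    + (4 * ω) • ∑ i : Fin N, z i • pd i F z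
    + ((N : ℝ) * ω * (4 * a + 2 * b + 1)) • F z

/-!
The gauge factor `μ` is the exponential of a function with an explicit differential
`∑ i, φᵢ dxᵢ`. Hence `∂ᵢ² (μ G) = μ (∂ᵢ² + 2 φᵢ ∂ᵢ + φᵢ² + ∂ᵢφᵢ) G`, and for `G = F ∘ ζ` the chain
rule turns `∂ᵢ` and `∂ᵢ²` into `2 xᵢ ∂ᵢ` and `4 zᵢ ∂ᵢ² + 2 ∂ᵢ` acting on `F`. Summed over `i`, the
first-order part gives that of `H̄₁` and the zeroth-order part gives the scalar potential of `H₁` up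
to a constant and a multiple of `∑ i, (zᵢ + zᵢ₊₁) / (zᵢ - zᵢ₊₁)²`. Both sums reduce to cyclic
summation by parts for `gᵢ = (zᵢ - zᵢ₊₁)⁻¹`; the constant comes from
`∑ i, zᵢ (gᵢ - gᵢ₋₁) = ∑ i, (zᵢ - zᵢ₊₁) gᵢ = N`.
-/

open Filter Topology

section PartialDerivatives

variable {N : ℕ} {E : Type} [NormedAddCommGroup E] [NormedSpace ℝ E] {i : Fin N} {x : Fin N → ℝ}

lemma pd_eq_of_hasFDerivAt {f : (Fin N → ℝ) → E} {f' : (Fin N → ℝ) →L[ℝ] E}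
    (hf : HasFDerivAt f f' x) : pd i f x = f' (Pi.single i 1) := by
  rw [pd, hf.fderiv]

lemma pd_congr {f g : (Fin N → ℝ) → E} (hfg : f =ᶠ[𝓝 x] g) : pd i f x = pd i g x := by
  rw [pd, pd, hfg.fderiv_eq]

lemma pd_add {f g : (Fin N → ℝ) → E} (hf : DifferentiableAt ℝ f x)
    (hg : DifferentiableAt ℝ g x) : pd i (fun y => f y + g y) x = pd i f x + pd i g x := by
  simp only [pd, fderiv_fun_add hf hg, add_apply]

lemma pd_smul {f : (Fin N → ℝ) → ℝ} {g : (Fin N → ℝ) → E} (hf : DifferentiableAt ℝ f x)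
    (hg : DifferentiableAt ℝ g x) :
    pd i (fun y => f y • g y) x = f x • pd i g x + pd i f x • g x := by
  simp [pd, fderiv_fun_smul hf hg]

lemma differentiableAt_pd {f : (Fin N → ℝ) → E} (hf : ContDiffAt ℝ 2 f x) :
    DifferentiableAt ℝ (pd i f) x := by
  have hf' : DifferentiableAt ℝ (fderiv ℝ f) x :=
    (hf.fderiv_right (m := 1) (by norm_num)).differentiableAt one_ne_zero
  exact hf'.clm_apply (differentiableAt_const _)

lemma pd_pd_smul_of_pd_eq_mul {μ φ : (Fin N → ℝ) → ℝ} {G : (Fin N → ℝ) → E}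
    (hμ : ∀ᶠ y in 𝓝 x, DifferentiableAt ℝ μ y ∧ pd i μ y = μ y * φ y)
    (hφ : DifferentiableAt ℝ φ x) (hG : ContDiffAt ℝ 2 G x) :
    pd i (pd i fun y => μ y • G y) x =
      μ x • (pd i (pd i G) x + (2 * φ x) • pd i G x + (φ x ^ 2 + pd i φ x) • G x) := by
  have pd_first : pd i (fun y => μ y • G y) =ᶠ[𝓝 x] fun y => μ y • (pd i G y + φ y • G y) := by
    filter_upwards [hμ, hG.eventually (by simp)] with y ⟨hμy, hpd⟩ hGy
    rw [pd_smul hμy (hGy.differentiableAt two_ne_zero), hpd]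
    module
  obtain ⟨hμx, hpd⟩ := hμ.self_of_nhds
  have hGx : DifferentiableAt ℝ G x := hG.differentiableAt two_ne_zero
  have hpdG : DifferentiableAt ℝ (pd i G) x := differentiableAt_pd hG
  rw [pd_congr pd_first, pd_smul hμx (hpdG.fun_add (hφ.fun_smul hGx)),
    pd_add hpdG (hφ.fun_smul hGx), pd_smul hφ hGx, hpd]
  module

end PartialDerivatives

section SquareCoordinates

variable {N : ℕ} {E : Type} [NormedAddCommGroup E] [NormedSpace ℝ E] {i : Fin N} {x : Fin N → ℝ}
  {F : (Fin N → ℝ) → E}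

lemma zeta_apply (x : Fin N → ℝ) (j : Fin N) : zeta x j = x j ^ 2 := rfl

lemma contDiff_zeta {n : WithTop ℕ∞} : ContDiff ℝ n (zeta (N := N)) := by
  unfold zeta
  fun_prop

lemma hasFDerivAt_sq_apply (x : Fin N → ℝ) (j : Fin N) :
    HasFDerivAt (fun y => y j ^ 2)
      ((2 * x j) • (ContinuousLinearMap.proj j : (Fin N → ℝ) →L[ℝ] ℝ)) x := by
  simpa using (hasFDerivAt_apply (𝕜 := ℝ) j x).pow 2

lemma hasFDerivAt_zeta (x : Fin N → ℝ) :
    HasFDerivAt zeta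
      (ContinuousLinearMap.pi fun j =>
        (2 * x j) • (ContinuousLinearMap.proj j : (Fin N → ℝ) →L[ℝ] ℝ)) x :=
  hasFDerivAt_pi.2 (hasFDerivAt_sq_apply x)

lemma pd_comp_zeta (hF : DifferentiableAt ℝ F (zeta x)) :
    pd i (fun y => F (zeta y)) x = (2 * x i) • pd i F (zeta x) := by
  have single : (fun j => 2 * x j * (Pi.single i 1 : Fin N → ℝ) j) = (2 * x i) • Pi.single i 1 := by
    ext j
    obtain rfl | hj := eq_or_ne j i <;> simp [*]
  have hcomp : HasFDerivAt (fun y => F (zeta y)) _ x := hF.hasFDerivAt.comp x (hasFDerivAt_zeta x)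
  rw [pd_eq_of_hasFDerivAt hcomp, pd, ← map_smul, ← single]
  rfl

lemma pd_pd_comp_zeta (hF : ContDiffAt ℝ 2 F (zeta x)) :
    pd i (pd i fun y => F (zeta y)) x =
      (4 * x i ^ 2) • pd i (pd i F) (zeta x) + (2 : ℝ) • pd i F (zeta x) := by
  have pd_first : pd i (fun y => F (zeta y)) =ᶠ[𝓝 x] fun y => (2 * y i) • pd i F (zeta y) := by
    filter_upwards [(hasFDerivAt_zeta x).continuousAt.eventually (hF.eventually (by simp))]
      with y hy
    exact pd_comp_zeta (hy.differentiableAt two_ne_zero)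
  have hpdF : DifferentiableAt ℝ (pd i F) (zeta x) := differentiableAt_pd hF
  have pd_two_mul : pd i (fun y : Fin N → ℝ => 2 * y i) x = 2 := by
    rw [pd_eq_of_hasFDerivAt ((hasFDerivAt_apply i x).const_mul 2)]
    simp
  have hcomp : DifferentiableAt ℝ (fun y => pd i F (zeta y)) x :=
    hpdF.comp x (hasFDerivAt_zeta x).differentiableAt
  rw [pd_congr pd_first, pd_smul (by fun_prop) hcomp, pd_comp_zeta hpdF, pd_two_mul]
  module

end SquareCoordinates

section CyclicSums

lemma sum_sub_const_eq_sum_add_const {ι M : Type*} [Fintype ι] [AddGroup ι] [AddCommMonoid M]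
    (f : ι → ι → M) (c : ι) : ∑ i, f (i - c) i = ∑ i, f i (i + c) := by
  rw [← Equiv.sum_comp (Equiv.addRight c)]
  simp

variable {N : ℕ} [NeZero N]

/-- The inverse gap `(z_i - z_{i+1})⁻¹` between cyclic neighbours, with value `0` if they agree. -/
def invGap (z : Fin N → ℝ) (i : Fin N) : ℝ := (z i - z (i + 1))⁻¹

lemma sum_smul_invGap_sub {E : Type*} [AddCommGroup E] [Module ℝ E] (z : Fin N → ℝ)
    (D : Fin N → E) :
    ∑ i, (invGap z i - invGap z (i - 1)) • D i = ∑ i, invGap z i • (D i - D (i + 1)) := by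
  simp only [sub_smul, smul_sub, Finset.sum_sub_distrib,
    sum_sub_const_eq_sum_add_const fun j i => invGap z j • D i]

lemma sum_invGap_sub (z : Fin N → ℝ) : ∑ i, (invGap z i - invGap z (i - 1)) = 0 := by
  simpa using sum_smul_invGap_sub z (1 : Fin N → ℝ)

lemma sum_invGap_sub_mul {z : Fin N → ℝ} (hz : ∀ i, z i ≠ z (i + 1)) :
    ∑ i, (invGap z i - invGap z (i - 1)) * z i = N := by
  have cancel (i : Fin N) : invGap z i * (z i - z (i + 1)) = 1 :=
    inv_mul_cancel₀ (sub_ne_zero.2 (hz i))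
  simpa [cancel] using sum_smul_invGap_sub z z

lemma sum_mul_sq_invGap_add_sq (z : Fin N → ℝ) :
    ∑ i, z i * (invGap z i ^ 2 + invGap z (i - 1) ^ 2) =
      ∑ i, (z i + z (i + 1)) / (z i - z (i + 1)) ^ 2 := by
  simp only [mul_add, Finset.sum_add_distrib, add_div,
    sum_sub_const_eq_sum_add_const fun j i => z i * invGap z j ^ 2]
  simp only [invGap, inv_pow, div_eq_mul_inv]

end CyclicSums

section GaugeFactor

variable {N : ℕ} [NeZero N] {x : Fin N → ℝ}

/-- The points with positive coordinates no two cyclically adjacent of which agree. This is the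
locus where the gauge factor `mu1` and the potential of `H1` are both regular. -/
def regularSet (N : ℕ) [NeZero N] : Set (Fin N → ℝ) :=
  {x | (∀ i, 0 < x i) ∧ ∀ i, x i ≠ x (i + 1)}

lemma isOpen_regularSet : IsOpen (regularSet N) := by
  simp only [regularSet, Set.ofPred_and, Set.ofPred_forall]
  exact (isOpen_iInter_of_finite fun i => isOpen_lt continuous_const (continuous_apply i)).inter
    (isOpen_iInter_of_finite fun i => isOpen_ne_fun (continuous_apply i) (continuous_apply _))

lemma add_one_ne_of_mem_regularSet (hx : x ∈ regularSet N) (i : Fin N) : i + 1 ≠ i :=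
  fun h => hx.2 i (congrArg x h.symm)

lemma zeta_ne_zeta_add_one (hx : x ∈ regularSet N) (i : Fin N) :
    zeta x i ≠ zeta x (i + 1) :=
  fun h => hx.2 i ((pow_left_inj₀ (hx.1 i).le (hx.1 (i + 1)).le two_ne_zero).1 h)

lemma pos_of_mem_C1 (hx : x ∈ C1 N) (i : Fin N) : 0 < x i :=
  hx.2.trans_le (hx.1.monotone (Fin.zero_le i))

lemma C1_subset_regularSet (hN : 2 ≤ N) : C1 N ⊆ regularSet N := by
  refine fun x hx => ⟨pos_of_mem_C1 hx, fun i h => ?_⟩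
  have one_eq_zero : (1 : Fin N) = 0 := left_eq_add.1 (hx.1.injective h)
  have := Fin.one_eq_zero_iff.1 one_eq_zero
  omega

lemma isOpen_C1 : IsOpen (C1 N) := by
  simp only [C1, StrictMono, Set.ofPred_and, Set.ofPred_forall]
  exact (isOpen_iInter_of_finite fun i => isOpen_iInter_of_finite fun j =>
    isOpen_iInter_of_finite fun _ => isOpen_lt (continuous_apply i) (continuous_apply j)).inter
      (isOpen_lt continuous_const (continuous_apply 0))

lemma zeta_mem_C1 (hx : x ∈ C1 N) : zeta x ∈ C1 N :=
  ⟨fun i _ hij => pow_lt_pow_left₀ (hx.1 hij) (pos_of_mem_C1 hx i).le two_ne_zero, pow_pos hx.2 2⟩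

/-- The logarithm of the gauge factor `mu1`. No absolute value is needed, since `Real.log` is
even. -/
def logGauge (a b ω : ℝ) (x : Fin N → ℝ) : ℝ :=
  -(ω / 2) * ∑ i, x i ^ 2 + ∑ i, (a * Real.log (x i ^ 2 - x (i + 1) ^ 2) + b * Real.log (x i))

/-- The `i`-th partial derivative of `logGauge`. -/
def logGaugeGrad (a b ω : ℝ) (i : Fin N) (x : Fin N → ℝ) : ℝ :=
  -ω * x i + b * (x i)⁻¹ + 2 * a * (x i * (invGap (zeta x) i - invGap (zeta x) (i - 1)))

variable (a b ω : ℝ)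

lemma mu1_eq_exp_logGauge (hx : x ∈ regularSet N) :
    mu1 a b ω x = Real.exp (logGauge a b ω x) := by
  rw [logGauge, Real.exp_add, Real.exp_sum, mu1]
  congr 1
  refine Finset.prod_congr rfl fun i _ => ?_
  have gap_ne_zero : x i ^ 2 - x (i + 1) ^ 2 ≠ 0 := sub_ne_zero.2 (zeta_ne_zeta_add_one hx i)
  rw [Real.exp_add, Real.rpow_def_of_pos (abs_pos.2 gap_ne_zero), Real.rpow_def_of_pos (hx.1 i),
    Real.log_abs, mul_comm a, mul_comm b]

lemma hasFDerivAt_logGauge (hx : x ∈ regularSet N) :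
    HasFDerivAt (logGauge a b ω)
      (∑ i, logGaugeGrad a b ω i x • (ContinuousLinearMap.proj i : (Fin N → ℝ) →L[ℝ] ℝ)) x := by
  have dsq := hasFDerivAt_sq_apply x
  have dgaussian := (HasFDerivAt.fun_sum (u := Finset.univ) fun j _ => dsq j).const_mul (-(ω / 2))
  have dlogs := HasFDerivAt.fun_sum (u := Finset.univ) fun j _ =>
    ((((dsq j).fun_sub (dsq (j + 1))).log (sub_ne_zero.2 (zeta_ne_zeta_add_one hx j))).const_mul
      a).fun_add (((hasFDerivAt_apply j x).log (hx.1 j).ne').const_mul b)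
  refine (dgaussian.fun_add dlogs).congr_fderiv (ContinuousLinearMap.ext fun v => ?_)
  calc
    _ = ∑ j, (-ω * x j + b * (x j)⁻¹) * v j +
        ∑ j, invGap (zeta x) j • (2 * a * (x j * v j) - 2 * a * (x (j + 1) * v (j + 1))) := by
      simp only [add_apply, sub_apply, smul_apply, sum_apply, ContinuousLinearMap.proj_apply,
        smul_eq_mul, Finset.mul_sum, ← Finset.sum_add_distrib]
      refine Finset.sum_congr rfl fun j _ => ?_
      simp only [invGap, zeta_apply]
      ring
    _ = ∑ j, (-ω * x j + b * (x j)⁻¹) * v j +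
        ∑ j, (invGap (zeta x) j - invGap (zeta x) (j - 1)) • (2 * a * (x j * v j)) := by
      rw [sum_smul_invGap_sub]
    _ = _ := by
      simp only [sum_apply, smul_apply, ContinuousLinearMap.proj_apply, smul_eq_mul,
        ← Finset.sum_add_distrib, logGaugeGrad]
      exact Finset.sum_congr rfl fun j _ => by ring

lemma hasFDerivAt_mu1 (hx : x ∈ regularSet N) :
    HasFDerivAt (mu1 a b ω)
      (mu1 a b ω x •
        ∑ i, logGaugeGrad a b ω i x • (ContinuousLinearMap.proj i : (Fin N → ℝ) →L[ℝ] ℝ)) x := by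
  rw [mu1_eq_exp_logGauge a b ω hx]
  refine (hasFDerivAt_logGauge a b ω hx).exp.congr_of_eventuallyEq ?_
  filter_upwards [isOpen_regularSet.mem_nhds hx] with y hy using mu1_eq_exp_logGauge a b ω hy

lemma pd_mu1 (hx : x ∈ regularSet N) (i : Fin N) :
    pd i (mu1 a b ω) x = mu1 a b ω x * logGaugeGrad a b ω i x := by
  simp [pd_eq_of_hasFDerivAt (hasFDerivAt_mu1 a b ω hx), Pi.single_apply]

lemma hasFDerivAt_invGap {z : Fin N → ℝ} {i : Fin N} (hz : z i ≠ z (i + 1)) :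
    HasFDerivAt (fun z => invGap z i)
      (-invGap z i ^ 2 •
        ((ContinuousLinearMap.proj i : (Fin N → ℝ) →L[ℝ] ℝ) -
          ContinuousLinearMap.proj (i + 1))) z := by
  have dgap := (hasFDerivAt_apply (𝕜 := ℝ) i z).fun_sub (hasFDerivAt_apply (i + 1) z)
  refine ((hasDerivAt_inv (sub_ne_zero.2 hz)).comp_hasFDerivAt z dgap).congr_fderiv ?_
  simp only [invGap, inv_pow]

lemma differentiableAt_invGap_zeta (hx : x ∈ regularSet N) (i : Fin N) :
    DifferentiableAt ℝ (fun y => invGap (zeta y) i) x :=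
  (hasFDerivAt_invGap (zeta_ne_zeta_add_one hx i)).differentiableAt.comp x
    (hasFDerivAt_zeta x).differentiableAt

lemma differentiableAt_logGaugeGrad (hx : x ∈ regularSet N) (i : Fin N) :
    DifferentiableAt ℝ (logGaugeGrad a b ω i) x := by
  have hgap := differentiableAt_invGap_zeta hx
  have hxi := (hx.1 i).ne'
  unfold logGaugeGrad
  fun_prop (disch := assumption)

lemma pd_invGap_zeta (hx : x ∈ regularSet N) (i : Fin N) :
    pd i (fun y => invGap (zeta y) i) x = -2 * x i * invGap (zeta x) i ^ 2 := by
  have hd := hasFDerivAt_invGap (zeta_ne_zeta_add_one hx i)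
  rw [pd_comp_zeta hd.differentiableAt, pd_eq_of_hasFDerivAt hd]
  simp [add_one_ne_of_mem_regularSet hx i]

lemma pd_invGap_zeta_sub_one (hx : x ∈ regularSet N) (i : Fin N) :
    pd i (fun y => invGap (zeta y) (i - 1)) x = 2 * x i * invGap (zeta x) (i - 1) ^ 2 := by
  have hne : i - 1 ≠ i := by simpa using (add_one_ne_of_mem_regularSet hx (i - 1)).symm
  have hd := hasFDerivAt_invGap (zeta_ne_zeta_add_one hx (i - 1))
  rw [pd_comp_zeta hd.differentiableAt, pd_eq_of_hasFDerivAt hd]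
  simp [hne]

lemma pd_logGaugeGrad (hx : x ∈ regularSet N) (i : Fin N) :
    pd i (logGaugeGrad a b ω i) x =
      -ω - b / x i ^ 2 + 2 * a * (invGap (zeta x) i - invGap (zeta x) (i - 1)) -
        4 * a * (x i ^ 2 * (invGap (zeta x) i ^ 2 + invGap (zeta x) (i - 1) ^ 2)) := by
  have dgap (j : Fin N) := (differentiableAt_invGap_zeta hx j).hasFDerivAt
  have dcoord := hasFDerivAt_apply (𝕜 := ℝ) i x
  have dinv : HasFDerivAt (fun y : Fin N → ℝ => (y i)⁻¹) _ x :=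
    (hasDerivAt_inv (hx.1 i).ne').comp_hasFDerivAt x dcoord
  have dgrad : HasFDerivAt (logGaugeGrad a b ω i) _ x :=
    ((dcoord.const_mul (-ω)).fun_add (dinv.const_mul b)).fun_add
      ((dcoord.fun_mul ((dgap i).fun_sub (dgap (i - 1)))).const_mul (2 * a))
  have hgap := pd_invGap_zeta hx i
  have hgap' := pd_invGap_zeta_sub_one hx i
  rw [pd] at hgap hgap'
  rw [pd_eq_of_hasFDerivAt dgrad]
  simp only [neg_smul, smul_neg, smul_add, add_apply, neg_apply, smul_apply, sub_apply,
    ContinuousLinearMap.proj_apply, Pi.single_eq_same, smul_eq_mul, mul_one, neg_mul, hgap, hgap']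
  ring

lemma sq_add_pd_logGaugeGrad (hx : x ∈ regularSet N) (i : Fin N) :
    logGaugeGrad a b ω i x ^ 2 + pd i (logGaugeGrad a b ω i) x =
      ω ^ 2 * x i ^ 2 + b * (b - 1) / x i ^ 2 +
        8 * a ^ 2 * x i ^ 2 / ((x i ^ 2 - x (i - 1) ^ 2) * (x i ^ 2 - x (i + 1) ^ 2)) +
        4 * a * (a - 1) * (x i ^ 2 * (invGap (zeta x) i ^ 2 + invGap (zeta x) (i - 1) ^ 2)) +
        (2 * a + 4 * a * b) * (invGap (zeta x) i - invGap (zeta x) (i - 1)) -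
        4 * a * ω * ((invGap (zeta x) i - invGap (zeta x) (i - 1)) * x i ^ 2) -
        ω * (2 * b + 1) := by
  have gap_prod : 8 * a ^ 2 * x i ^ 2 / ((x i ^ 2 - x (i - 1) ^ 2) * (x i ^ 2 - x (i + 1) ^ 2)) =
      -(8 * a ^ 2 * x i ^ 2 * invGap (zeta x) (i - 1) * invGap (zeta x) i) := by
    rw [← neg_sub (x (i - 1) ^ 2)]
    simp only [invGap, zeta_apply, sub_add_cancel, div_eq_mul_inv, mul_inv, inv_neg]
    ring
  have hxi : x i ≠ 0 := (hx.1 i).ne'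
  rw [gap_prod, pd_logGaugeGrad a b ω hx, logGaugeGrad]
  generalize invGap (zeta x) i = g, invGap (zeta x) (i - 1) = g'
  field_simp
  ring

lemma sum_sq_add_pd_logGaugeGrad (hx : x ∈ regularSet N) :
    ∑ i, (logGaugeGrad a b ω i x ^ 2 + pd i (logGaugeGrad a b ω i) x) =
      ω ^ 2 * ∑ i, x i ^ 2 + ∑ i, b * (b - 1) / x i ^ 2 +
        ∑ i, 8 * a ^ 2 * x i ^ 2 / ((x i ^ 2 - x (i - 1) ^ 2) * (x i ^ 2 - x (i + 1) ^ 2)) +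
        4 * a * (a - 1) * ∑ i, (x i ^ 2 + x (i + 1) ^ 2) / (x i ^ 2 - x (i + 1) ^ 2) ^ 2 -
        N * ω * (4 * a + 2 * b + 1) := by
  have linear := sum_invGap_sub (zeta x)
  have weighted := sum_invGap_sub_mul (zeta_ne_zeta_add_one hx)
  have quadratic := sum_mul_sq_invGap_add_sq (zeta x)
  simp only [zeta_apply] at weighted quadratic
  rw [Finset.sum_congr rfl fun i _ => sq_add_pd_logGaugeGrad a b ω hx i,
    Finset.sum_sub_distrib, Finset.sum_sub_distrib]
  simp only [Finset.sum_add_distrib, ← Finset.mul_sum, linear, weighted, quadratic,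
    Finset.sum_const, Finset.card_univ, Fintype.card_fin, nsmul_eq_mul]
  ring

lemma sum_logGaugeGrad_smul {E : Type*} [AddCommGroup E] [Module ℝ E] (hx : x ∈ regularSet N)
    (D : Fin N → E) :
    ∑ i, (4 * x i * logGaugeGrad a b ω i x) • D i =
      (4 * b) • ∑ i, D i - (4 * ω) • ∑ i, x i ^ 2 • D i +
        (8 * a) •
          ∑ i, (x i ^ 2 - x (i + 1) ^ 2)⁻¹ • (x i ^ 2 • D i - x (i + 1) ^ 2 • D (i + 1)) := by
  have by_parts := sum_smul_invGap_sub (zeta x) fun i => x i ^ 2 • D i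
  have summand (i : Fin N) : (4 * x i * logGaugeGrad a b ω i x) • D i =
      (4 * b) • D i - (4 * ω) • x i ^ 2 • D i +
        (8 * a) • (invGap (zeta x) i - invGap (zeta x) (i - 1)) • x i ^ 2 • D i := by
    have hxi : x i ≠ 0 := (hx.1 i).ne'
    rw [logGaugeGrad]
    match_scalars
    field_simp
    ring
  simp only [summand, Finset.sum_add_distrib, Finset.sum_sub_distrib, ← Finset.smul_sum, by_parts]
  rfl

lemma pd_pd_mu1_smul_comp_zeta {E : Type} [NormedAddCommGroup E] [NormedSpace ℝ E]
    {F : (Fin N → ℝ) → E} (hx : x ∈ regularSet N) (hF : ContDiffAt ℝ 2 F (zeta x)) (i : Fin N) :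
    pd i (pd i fun y => mu1 a b ω y • F (zeta y)) x =
      mu1 a b ω x • ((4 : ℝ) • x i ^ 2 • pd i (pd i F) (zeta x) + (2 : ℝ) • pd i F (zeta x) +
        (4 * x i * logGaugeGrad a b ω i x) • pd i F (zeta x) +
        (logGaugeGrad a b ω i x ^ 2 + pd i (logGaugeGrad a b ω i) x) • F (zeta x)) := by
  have hμ : ∀ᶠ y in 𝓝 x, DifferentiableAt ℝ (mu1 a b ω) y ∧
      pd i (mu1 a b ω) y = mu1 a b ω y * logGaugeGrad a b ω i y := by
    filter_upwards [isOpen_regularSet.mem_nhds hx] with y hy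
    exact ⟨(hasFDerivAt_mu1 a b ω hy).differentiableAt, pd_mu1 a b ω hy i⟩
  have hFζ : ContDiffAt ℝ 2 (fun y => F (zeta y)) x := hF.comp x contDiff_zeta.contDiffAt
  rw [pd_pd_smul_of_pd_eq_mul hμ (differentiableAt_logGaugeGrad a b ω hx i) hFζ, pd_pd_comp_zeta hF,
    pd_comp_zeta (hF.differentiableAt two_ne_zero)]
  module

end GaugeFactor

section GaugeTransformation

lemma Sop_smul {N d : ℕ} (i j : Fin N) (c : ℝ) (v : Spin N d) :
    Sop i j (c • v) = c • Sop i j v := rfl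

theorem stmt_11_general {N d : ℕ} [NeZero N] (a b ω : ℝ) {F : (Fin N → ℝ) → Spin N d}
    {x : Fin N → ℝ} (hx : x ∈ regularSet N) (hF : ContDiffAt ℝ 2 F (zeta x)) :
    H1 a b ω (fun y => mu1 a b ω y • F (zeta y)) x = mu1 a b ω x • Hbar1 a b ω F (zeta x) := by
  simp only [H1, T1star, Hbar1, zeta_apply, Sop_smul, pd_pd_mu1_smul_comp_zeta a b ω hx hF]
  simp only [smul_comm _ (mu1 a b ω x), ← Finset.smul_sum, ← smul_neg, ← smul_add, ← smul_sub]
  simp only [Finset.sum_add_distrib, smul_sub, Finset.sum_sub_distrib, ← Finset.smul_sum,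
    ← Finset.sum_smul, sum_sq_add_pd_logGaugeGrad a b ω hx,
    sum_logGaugeGrad_smul a b ω hx fun i => pd i F (zeta x)]
  congr 1
  module

end GaugeTransformation

theorem stmt_11 (N d : ℕ) [NeZero N] (hN : 3 ≤ N) (hd : 1 ≤ d)
    (a b ω : ℝ) (ha : 1 / 2 < a) (hb : 1 / 2 < b) (hω : 0 < ω)
    (F : (Fin N → ℝ) → Spin N d) (hF : ContDiffOn ℝ (⊤ : ℕ∞) F (C1 N)) :
    ∀ x ∈ C1 N,
      H1 a b ω (fun y => mu1 a b ω y • F (zeta y)) x =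
        mu1 a b ω x • Hbar1 a b ω F (zeta x) := by
  exact fun x hx => stmt_11_general a b ω (C1_subset_regularSet (by omega) hx)
    ((hF.contDiffAt (isOpen_C1.mem_nhds (zeta_mem_C1 hx))).of_le (WithTop.coe_le_coe.2 le_top))
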